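/- arXiv:1410.3166 — 3 statements merged into one kernel-verified Lean document; each statement's English description precedes it below -/
import Mathlib

section
/- For a finite-dimensional Λ-module M the following are equivalent: (a) socseq(M) ≠ reverse(rad(M)); (b) there exist ρ ∈ {1,…,L} and x ∈ M with x ∉ J^ρ M and J·x ⊆ J^{ρ+1} M; (c) there exists ρ ∈ {0,…,L−1} such that the Λ-module J^ρ M / J^{ρ+2} M has a simple direct summand, i.e., contains a simple submodule admitting a complementary submodule. -/
noncomputable section

/-- The relation on the free algebra killing all products of `L+1` generators. -/
def TruncRel (K : Type*) [Field K] (r L : ℕ) :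
    FreeAlgebra K (Fin r) → FreeAlgebra K (Fin r) → Prop := fun a b =>
  (∃ f : Fin (L + 1) → Fin r, a = (List.ofFn fun j => FreeAlgebra.ι K (f j)).prod) ∧ b = 0

/-- The local truncated path algebra with `r` loops and Loewy length `L+1`:
the quotient of `K⟨X_1,…,X_r⟩` by the two-sided ideal generated by all products
of `L+1` generators. -/
def TruncAlg (K : Type*) [Field K] (r L : ℕ) : Type _ := RingQuot (TruncRel K r L)

instance (K : Type*) [Field K] (r L : ℕ) : Ring (TruncAlg K r L) :=
  inferInstanceAs (Ring (RingQuot _))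

instance (K : Type*) [Field K] (r L : ℕ) : Algebra K (TruncAlg K r L) :=
  inferInstanceAs (Algebra K (RingQuot _))

/-- The images of the generators `X i` in the truncated algebra. -/
def gen (K : Type*) [Field K] (r L : ℕ) (i : Fin r) : TruncAlg K r L :=
  RingQuot.mkAlgHom K (TruncRel K r L) (FreeAlgebra.ι K i)

/-- The two-sided ideal `J` of `Λ` generated by the images of `X_1,…,X_r`,
realized as a `K`-submodule of `Λ`. -/
def Jrad (K : Type*) [Field K] (r L : ℕ) : Submodule K (TruncAlg K r L) :=
  ⊤ * Submodule.span K (Set.range (gen K r L)) * ⊤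

/-- `J^l M`, the submodule of `M` given by the action of `J^l`. -/
def jpow (K : Type*) [Field K] (r L : ℕ) (M : Type*) [AddCommGroup M] [Module K M]
    [Module (TruncAlg K r L) M] [IsScalarTower K (TruncAlg K r L) M] (l : ℕ) :
    Submodule (TruncAlg K r L) M :=
  Submodule.span (TruncAlg K r L)
    {x : M | ∃ a ∈ (Jrad K r L ^ l : Submodule K (TruncAlg K r L)), ∃ m : M, x = a • m}

/-- The socle of a module: the supremum of all simple submodules. -/
def socle (R N : Type*) [Ring R] [AddCommGroup N] [Module R N] : Submodule R N :=
  sSup {p : Submodule R N | IsSimpleModule R ↥p}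

/-- The socle series: `socSeries R M l` is `soc_{l-1} M`, so `socSeries R M 0 = soc_{-1} M = ⊥`
and `socSeries R M (l+1) = soc_l M` is the preimage in `M` of `soc (M / soc_{l-1} M)`. -/
def socSeries (R M : Type*) [Ring R] [AddCommGroup M] [Module R M] : ℕ → Submodule R M
  | 0 => ⊥
  | l + 1 => Submodule.comap (socSeries R M l).mkQ (socle R (M ⧸ socSeries R M l))

/-- Dimension of the subquotient `q / (p ⊓ q)`; for `p ≤ q` this is `dim (q/p)`. -/
def quotDim (K M : Type*) [Field K] [AddCommGroup M] [Module K M]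
    (p q : Submodule K M) : ℕ :=
  Module.finrank K (↥q ⧸ Submodule.comap q.subtype p)

/-- The radical layering `rad(M) = (dim_K J^l M / J^{l+1} M)_{l=0,…,L}`. -/
def radLayering (K : Type*) [Field K] (r L : ℕ) (M : Type*) [AddCommGroup M] [Module K M]
    [Module (TruncAlg K r L) M] [IsScalarTower K (TruncAlg K r L) M] : Fin (L + 1) → ℕ :=
  fun l => quotDim K M ((jpow K r L M ((l : ℕ) + 1)).restrictScalars K)
    ((jpow K r L M (l : ℕ)).restrictScalars K)

/-- The socle layering `socseq(M) = (dim_K soc_l M / soc_{l-1} M)_{l=0,…,L}`. -/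
def socLayering (K : Type*) [Field K] (r L : ℕ) (M : Type*) [AddCommGroup M] [Module K M]
    [Module (TruncAlg K r L) M] [IsScalarTower K (TruncAlg K r L) M] : Fin (L + 1) → ℕ :=
  fun l => quotDim K M ((socSeries (TruncAlg K r L) M (l : ℕ)).restrictScalars K)
    ((socSeries (TruncAlg K r L) M ((l : ℕ) + 1)).restrictScalars K)

/-- The dominance order on `ℕ^{L+1}`: `a ≼ b` iff all partial sums satisfy `≤`. -/
def DomLE (L : ℕ) (a b : Fin (L + 1) → ℕ) : Prop :=
  ∀ l : Fin (L + 1), ∑ j ∈ Finset.Iic l, a j ≤ ∑ j ∈ Finset.Iic l, b j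

/-- `reverse (a_0, …, a_L) = (a_L, …, a_0)`. -/
def revTuple (L : ℕ) (a : Fin (L + 1) → ℕ) : Fin (L + 1) → ℕ := fun l => a l.rev

/-!
Let `R` be a ring with Jacobson radical `J` such that `R / J` is semisimple and `J ^ (L + 1) = 0`.
The socle of any module is the annihilator of `J` in it, so `soc_l M = {x | J x ⊆ soc_{l-1} M}`, and
inductively `J^{L+1-l} M ⊆ soc_{l-1} M`. Comparing dimensions along the two filtrations, the
layerings are reverse to each other iff all these inclusions are equalities, and the first one to
fail provides `x ∉ J^ρ M` with `J x ⊆ J^{ρ+1} M`.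

A simple submodule of `N` not contained in `J N` is disjoint from `J N` and therefore has a
complement, as `N / J N` is semisimple; conversely a simple summand `S`, with complement `T`,
satisfies `S ⊄ J N = J T`. Hence `N` has a simple summand iff `soc N ⊄ J N`, and for
`N = J^ρ M / J^{ρ+2} M` this asks for an `x ∈ J^ρ M` outside `J^{ρ+1} M` with `J x ⊆ J^{ρ+2} M`.

For the truncated path algebra, the ideal generated by the arrows is nilpotent with quotient a
homomorphic image of `K`, so it is the Jacobson radical.
-/

section Socle

variable {R N : Type*} [Ring R] [AddCommGroup N] [Module R N]

theorem smul_span_singleton_le_iff {I : Ideal R} [I.IsTwoSided] {x : N} {P : Submodule R N} :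
    I • Submodule.span R {x} ≤ P ↔ ∀ a ∈ I, a • x ∈ P := by
  refine Submodule.smul_le.trans ⟨fun h a ha ↦ h a ha x (Submodule.mem_span_singleton_self x),
    fun h a ha y hy ↦ ?_⟩
  obtain ⟨b, rfl⟩ := Submodule.mem_span_singleton.1 hy
  rw [← mul_smul]
  exact h _ (I.mul_mem_right b ha)

theorem isSemisimpleModule_socle : IsSemisimpleModule R (socle R N) := by
  rw [socle, sSup_eq_iSup]
  exact isSemisimpleModule_biSup_of_isSemisimpleModule_submodule
    fun p (_ : IsSimpleModule R p) ↦ inferInstance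

theorem le_socle_of_isSemisimpleModule (p : Submodule R N) [IsSemisimpleModule R p] :
    p ≤ socle R N := by
  have h_top : (⊤ : Submodule R p) ≤ (socle R N).comap p.subtype := by
    rw [← IsSemisimpleModule.sSup_simples_eq_top R p]
    refine sSup_le fun m (_ : IsSimpleModule R m) ↦ Submodule.map_le_iff_le_comap.1 (le_sSup ?_)
    exact .congr (m.equivMapOfInjective _ p.subtype_injective).symm
  simpa only [Submodule.map_subtype_top] using Submodule.map_le_iff_le_comap.2 h_top

variable [IsSemisimpleRing (R ⧸ Ring.jacobson R)]

theorem isSemisimpleModule_of_jacobson_le_annihilator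
    (h : Ring.jacobson R ≤ Module.annihilator R N) : IsSemisimpleModule R N := by
  have hN : Module.IsTorsionBySet R N (Ring.jacobson R) :=
    (Module.isTorsionBySet_iff_subset_annihilator ..).2 h
  let _ := hN.module
  exact (hN.semilinearMap.isSemisimpleModule_iff_of_bijective Function.bijective_id).2
    inferInstance

theorem le_socle_iff {p : Submodule R N} : p ≤ socle R N ↔ Ring.jacobson R • p = ⊥ := by
  rw [← Submodule.le_annihilator_iff]
  constructor <;> intro h
  · have := isSemisimpleModule_socle (R := R) (N := N)
    exact (IsSemisimpleModule.jacobson_le_annihilator R (socle R N)).trans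
      (Submodule.annihilator_mono h)
  · have := isSemisimpleModule_of_jacobson_le_annihilator h
    exact le_socle_of_isSemisimpleModule p

theorem mem_socle_iff {x : N} : x ∈ socle R N ↔ ∀ a ∈ Ring.jacobson R, a • x = 0 := by
  rw [← Submodule.span_singleton_le_iff_mem, le_socle_iff, ← le_bot_iff,
    smul_span_singleton_le_iff]
  simp only [Submodule.mem_bot]

theorem le_socSeries_succ_iff {p : Submodule R N} {l : ℕ} :
    p ≤ socSeries R N (l + 1) ↔ Ring.jacobson R • p ≤ socSeries R N l := by
  rw [socSeries, ← Submodule.map_le_iff_le_comap, le_socle_iff, ← Submodule.map_smul'',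
    ← le_bot_iff, Submodule.map_le_iff_le_comap, Submodule.comap_bot, Submodule.ker_mkQ]

theorem mem_socSeries_succ_iff {x : N} {l : ℕ} :
    x ∈ socSeries R N (l + 1) ↔ ∀ a ∈ Ring.jacobson R, a • x ∈ socSeries R N l := by
  rw [← Submodule.span_singleton_le_iff_mem, le_socSeries_succ_iff, smul_span_singleton_le_iff]

theorem socSeries_mono : Monotone (socSeries R N) :=
  monotone_nat_of_le_succ fun _ ↦ le_socSeries_succ_iff.2 Submodule.smul_le_right

end Socle

section SimpleSummand

variable {R N : Type*} [Ring R] [AddCommGroup N] [Module R N]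

theorem exists_isCompl_of_disjoint {p P : Submodule R N} [IsSemisimpleModule R (N ⧸ P)]
    (h : Disjoint p P) : ∃ q, IsCompl p q := by
  obtain ⟨q, hq⟩ := exists_isCompl (p.map P.mkQ)
  refine ⟨q.comap P.mkQ, Submodule.disjoint_def.2 fun x hxp hxq ↦ ?_, codisjoint_iff.2 ?_⟩
  · have hx : P.mkQ x = 0 :=
      Submodule.disjoint_def.1 hq.disjoint _ (Submodule.mem_map_of_mem hxp) hxq
    exact Submodule.disjoint_def.1 h x hxp (by simpa using hx)
  · have hP : LinearMap.ker P.mkQ ≤ p ⊔ q.comap P.mkQ :=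
      (LinearMap.ker_le_comap P.mkQ).trans le_sup_right
    rw [← Submodule.comap_map_eq_self hP, Submodule.map_sup,
      Submodule.map_comap_eq_of_surjective P.mkQ_surjective, hq.sup_eq_top, Submodule.comap_top]

variable [IsSemisimpleRing (R ⧸ Ring.jacobson R)]

theorem isSemisimpleModule_quotient_jacobson_smul_top :
    IsSemisimpleModule R (N ⧸ Ring.jacobson R • (⊤ : Submodule R N)) :=
  isSemisimpleModule_of_jacobson_le_annihilator <|
    (Module.isTorsionBySet_iff_subset_annihilator ..).1 <|
      (Module.isTorsionBySet_quotient_iff _ _).2 fun _ _ ha ↦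
        Submodule.smul_mem_smul ha Submodule.mem_top

theorem exists_isSimpleModule_isCompl_iff :
    (∃ p : Submodule R N, IsSimpleModule R p ∧ ∃ q, IsCompl p q) ↔
      ¬ socle R N ≤ Ring.jacobson R • ⊤ := by
  constructor
  · rintro ⟨p, hp, q, hpq⟩ h
    have hp_le : p ≤ socle R N := le_sSup hp
    have hpq_le : p ≤ q := calc
      p ≤ Ring.jacobson R • (p ⊔ q) := hpq.sup_eq_top ▸ hp_le.trans h
      _ = Ring.jacobson R • q := by rw [Submodule.smul_sup, le_socle_iff.1 hp_le, bot_sup_eq]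
      _ ≤ q := Submodule.smul_le_right
    exact (isSimpleModule_iff_isAtom.1 hp).1 (hpq.disjoint.eq_bot_of_le hpq_le)
  · intro h
    obtain ⟨p, hp, hpJ⟩ : ∃ p : Submodule R N, IsSimpleModule R p ∧ ¬ p ≤ Ring.jacobson R • ⊤ := by
      contrapose! h
      exact sSup_le h
    have := isSemisimpleModule_quotient_jacobson_smul_top (R := R) (N := N)
    exact ⟨p, hp, exists_isCompl_of_disjoint <|
      ((isSimpleModule_iff_isAtom.1 hp).not_le_iff_disjoint.1 hpJ)⟩

theorem exists_isSimpleModule_isCompl_subquotient_iff {A C : Submodule R N}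
    (h : C ≤ Ring.jacobson R • A) :
    (∃ p : Submodule R (A ⧸ C.comap A.subtype), IsSimpleModule R p ∧ ∃ q, IsCompl p q) ↔
      ∃ x ∈ A, x ∉ Ring.jacobson R • A ∧ ∀ a ∈ Ring.jacobson R, a • x ∈ C := by
  set W := C.comap A.subtype
  have comap_smul : (Ring.jacobson R • A).comap A.subtype = Ring.jacobson R • ⊤ := by
    rw [← Submodule.comap_map_eq_of_injective A.subtype_injective (Ring.jacobson R • ⊤),
      Submodule.map_smul'', Submodule.map_subtype_top]
  have comap_smul_top : (Ring.jacobson R • (⊤ : Submodule R (A ⧸ W))).comap W.mkQ =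
      (Ring.jacobson R • A).comap A.subtype := by
    rw [← W.range_mkQ, LinearMap.range_eq_map, ← Submodule.map_smul'', Submodule.comap_map_mkQ,
      ← comap_smul, sup_eq_right.2 (Submodule.comap_mono h)]
  have mem_smul_top (x : A) :
      W.mkQ x ∈ Ring.jacobson R • (⊤ : Submodule R (A ⧸ W)) ↔ (x : N) ∈ Ring.jacobson R • A :=
    SetLike.ext_iff.1 comap_smul_top x
  have mem_socle (x : A) : W.mkQ x ∈ socle R (A ⧸ W) ↔ ∀ a ∈ Ring.jacobson R, a • (x : N) ∈ C :=
    mem_socle_iff.trans <| forall₂_congr fun a _ ↦ by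
      rw [← map_smul, Submodule.mkQ_apply, Submodule.Quotient.mk_eq_zero]
      rfl
  rw [exists_isSimpleModule_isCompl_iff, SetLike.not_le_iff_exists, W.mkQ_surjective.exists]
  simp only [mem_socle, mem_smul_top, Subtype.exists, exists_prop, and_comm]

end SimpleSummand

section RadSeries

/-- The radical series `J^l M` of a module `M` over a ring with Jacobson radical `J`. -/
def radSeries (R M : Type*) [Ring R] [AddCommGroup M] [Module R M] (l : ℕ) : Submodule R M :=
  Ring.jacobson R ^ l • ⊤

variable {R M : Type*} [Ring R] [AddCommGroup M] [Module R M]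

theorem radSeries_zero : radSeries R M 0 = ⊤ := by
  rw [radSeries, Submodule.pow_zero, Submodule.one_smul]

theorem radSeries_succ (l : ℕ) : radSeries R M (l + 1) = Ring.jacobson R • radSeries R M l := by
  rw [radSeries, Ideal.IsTwoSided.pow_succ, Submodule.mul_smul, radSeries]

theorem radSeries_antitone : Antitone (radSeries R M) :=
  antitone_nat_of_succ_le fun l ↦ radSeries_succ (R := R) (M := M) l ▸ Submodule.smul_le_right

theorem radSeries_eq_bot {n : ℕ} (h : Ring.jacobson R ^ n = ⊥) : radSeries R M n = ⊥ := by
  rw [radSeries, h, Submodule.bot_smul]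

theorem exists_mem_radSeries_notMem_succ {x : M} {ρ : ℕ} (hx : x ∉ radSeries R M ρ) :
    ∃ σ < ρ, x ∈ radSeries R M σ ∧ x ∉ radSeries R M (σ + 1) := by
  contrapose! hx
  have mem_of_le : ∀ σ ≤ ρ, x ∈ radSeries R M σ := by
    intro σ hσ
    induction σ with
    | zero => exact radSeries_zero (R := R) (M := M) ▸ Submodule.mem_top
    | succ σ ih => exact hx σ hσ (ih (Nat.le_of_succ_le hσ))
  exact mem_of_le ρ le_rfl

variable [IsSemisimpleRing (R ⧸ Ring.jacobson R)]

theorem exists_notMem_radSeries_iff_exists_simple_summand {L : ℕ} :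
    (∃ ρ, 1 ≤ ρ ∧ ρ ≤ L ∧ ∃ x : M, x ∉ radSeries R M ρ ∧
        ∀ a ∈ Ring.jacobson R, a • x ∈ radSeries R M (ρ + 1)) ↔
      ∃ ρ, ρ + 1 ≤ L ∧ ∃ p : Submodule R (radSeries R M ρ ⧸
          Submodule.comap (radSeries R M ρ).subtype (radSeries R M (ρ + 2))),
        IsSimpleModule R p ∧ ∃ q, IsCompl p q := by
  have summand_iff (ρ : ℕ) := exists_isSimpleModule_isCompl_subquotient_iff
    (A := radSeries R M ρ) (C := radSeries R M (ρ + 2))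
    (radSeries_succ (R := R) (M := M) ρ ▸ radSeries_antitone (Nat.le_succ (ρ + 1)))
  simp only [summand_iff, ← radSeries_succ]
  constructor
  · rintro ⟨ρ, -, hρL, x, hx, hJx⟩
    obtain ⟨σ, hσρ, hxσ, hxσ'⟩ := exists_mem_radSeries_notMem_succ hx
    exact ⟨σ, hσρ.trans_le hρL, x, hxσ, hxσ', fun a ha ↦
      radSeries_antitone (Nat.succ_le_succ hσρ) (hJx a ha)⟩
  · rintro ⟨ρ, hρL, x, -, hx, hJx⟩
    exact ⟨ρ + 1, Nat.le_add_left 1 ρ, hρL, x, hx, hJx⟩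

theorem radSeries_le_socSeries {n : ℕ} (h : Ring.jacobson R ^ n = ⊥) :
    ∀ l ≤ n, radSeries R M (n - l) ≤ socSeries R M l
  | 0, _ => (radSeries_eq_bot h).le
  | l + 1, hl => by
    rw [le_socSeries_succ_iff, ← radSeries_succ, show n - (l + 1) + 1 = n - l by omega]
    exact radSeries_le_socSeries h l (Nat.le_of_succ_le hl)

theorem forall_socSeries_eq_radSeries_iff {L : ℕ} (h : Ring.jacobson R ^ (L + 1) = ⊥) :
    (∀ l ≤ L + 1, socSeries R M l = radSeries R M (L + 1 - l)) ↔
      ¬ ∃ ρ, 1 ≤ ρ ∧ ρ ≤ L ∧ ∃ x : M, x ∉ radSeries R M ρ ∧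
        ∀ a ∈ Ring.jacobson R, a • x ∈ radSeries R M (ρ + 1) := by
  constructor
  · rintro h_eq ⟨ρ, -, hρL, x, hx, hJx⟩
    have h_soc : socSeries R M (L - ρ) = radSeries R M (ρ + 1) := by
      rw [h_eq _ (by omega), show L + 1 - (L - ρ) = ρ + 1 by omega]
    have h_soc_succ : socSeries R M (L - ρ + 1) = radSeries R M ρ := by
      rw [h_eq _ (by omega), show L + 1 - (L - ρ + 1) = ρ by omega]
    rw [← h_soc_succ, mem_socSeries_succ_iff, h_soc] at hx
    exact hx hJx
  · intro h_not l hl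
    induction l with
    | zero => exact (radSeries_eq_bot h).symm
    | succ l ih =>
      refine le_antisymm (fun x hx ↦ ?_) (radSeries_le_socSeries h _ hl)
      rw [mem_socSeries_succ_iff, ih (Nat.le_of_succ_le hl)] at hx
      rw [Nat.add_sub_add_right]
      obtain rfl | hlL := (Nat.le_of_succ_le_succ hl).eq_or_lt
      · rw [Nat.sub_self, radSeries_zero]
        exact Submodule.mem_top
      · by_contra hx'
        refine h_not ⟨L - l, by omega, by omega, x, hx', ?_⟩
        rwa [show L - l + 1 = L + 1 - l by omega]

end RadSeries

section LayeringDefs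

variable (K R M : Type*) [Field K] [Ring R] [Algebra K R] [AddCommGroup M] [Module K M] [Module R M]
  [IsScalarTower K R M] (L : ℕ)

/-- The radical layering `(dim_K J^l M / J^{l+1} M)_{l=0,…,L}` over a `K`-algebra `R` with Jacobson
radical `J`. -/
def radDims : Fin (L + 1) → ℕ :=
  fun l ↦ quotDim K M ((radSeries R M (l + 1)).restrictScalars K)
    ((radSeries R M l).restrictScalars K)

/-- The socle layering `(dim_K soc_l M / soc_{l-1} M)_{l=0,…,L}` over a `K`-algebra `R`. -/
def socDims : Fin (L + 1) → ℕ :=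
  fun l ↦ quotDim K M ((socSeries R M l).restrictScalars K)
    ((socSeries R M (l + 1)).restrictScalars K)

end LayeringDefs

section Layering

variable {K M : Type*} [Field K] [AddCommGroup M] [Module K M] [FiniteDimensional K M]

theorem quotDim_add_finrank {p q : Submodule K M} (h : p ≤ q) :
    quotDim K M p q + Module.finrank K p = Module.finrank K q := by
  rw [quotDim, ← (Submodule.comapSubtypeEquivOfLe h).finrank_eq,
    Submodule.finrank_quotient_add_finrank]

theorem forall_quotDim_eq_iff {A B : ℕ → Submodule K M} {n : ℕ}
    (hA : ∀ l < n, A l ≤ A (l + 1)) (hB : ∀ l < n, B l ≤ B (l + 1)) (hAB : ∀ l ≤ n, A l ≤ B l)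
    (h_zero : A 0 = B 0) :
    (∀ l < n, quotDim K M (B l) (B (l + 1)) = quotDim K M (A l) (A (l + 1))) ↔
      ∀ l ≤ n, B l = A l := by
  refine ⟨fun h_dim l hl ↦ ?_, fun h_eq l hl ↦ by rw [h_eq l hl.le, h_eq (l + 1) hl]⟩
  induction l with
  | zero => exact h_zero.symm
  | succ l ih =>
    refine (Submodule.eq_of_le_of_finrank_eq (hAB _ hl) ?_).symm
    rw [← quotDim_add_finrank (hA l hl), ← quotDim_add_finrank (hB l hl), h_dim l hl,
      ih (Nat.le_of_succ_le hl)]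

variable {R : Type*} [Ring R] [Algebra K R] [IsSemisimpleRing (R ⧸ Ring.jacobson R)]
  [Module R M] [IsScalarTower K R M]

theorem socDims_eq_revTuple_radDims_iff {L : ℕ} (h : Ring.jacobson R ^ (L + 1) = ⊥) :
    socDims K R M L = revTuple L (radDims K R M L) ↔
      ∀ l ≤ L + 1, socSeries R M l = radSeries R M (L + 1 - l) := by
  have h_chain := forall_quotDim_eq_iff (n := L + 1)
    (A := fun l ↦ (radSeries R M (L + 1 - l)).restrictScalars K)
    (B := fun l ↦ (socSeries R M l).restrictScalars K)
    (fun l _ ↦ radSeries_antitone (by omega)) (fun l _ ↦ socSeries_mono (Nat.le_succ l))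
    (radSeries_le_socSeries h)
    (congrArg _ (radSeries_eq_bot h))
  simp only [(Submodule.restrictScalars_injective K R M).eq_iff] at h_chain
  rw [← h_chain, funext_iff, Fin.forall_iff]
  refine forall₂_congr fun l hl ↦ ?_
  simp only [socDims, radDims, revTuple, Fin.val_rev, show L + 1 - (l + 1) + 1 = L + 1 - l by omega]

end Layering

section NilpotentIdeal

variable {R : Type*} [Ring R] {I : Ideal R} {n : ℕ}

theorem le_jacobson_of_pow_eq_bot (h : I ^ n = ⊥) : I ≤ Ring.jacobson R := by
  intro a ha
  rw [← Ideal.jacobson_bot, Ideal.mem_jacobson_iff]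
  intro b
  have h_nilp : IsNilpotent (b * a) :=
    ⟨n, by simpa only [h, Ideal.mem_bot] using Ideal.pow_mem_pow (I.mul_mem_left b ha) n⟩
  obtain ⟨u, hu⟩ := h_nilp.isUnit_add_one
  refine ⟨↑u⁻¹, ?_⟩
  rw [mul_assoc, ← mul_add_one, ← hu, Units.inv_mul, sub_self]
  exact zero_mem _

theorem jacobson_eq_of_pow_eq_bot [I.IsTwoSided] [IsSemisimpleRing (R ⧸ I)] (h : I ^ n = ⊥) :
    Ring.jacobson R = I :=
  (Ring.jacobson_le_of_eq_bot (IsSemisimpleRing.jacobson_eq_bot _)).antisymm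
    (le_jacobson_of_pow_eq_bot h)

theorem isSemisimpleRing_quotient_jacobson_of_pow_eq_bot [I.IsTwoSided] [IsSemisimpleRing (R ⧸ I)]
    (h : I ^ n = ⊥) : IsSemisimpleRing (R ⧸ Ring.jacobson R) := by
  obtain rfl := jacobson_eq_of_pow_eq_bot h
  assumption

end NilpotentIdeal

section Generators

variable {K A : Type*} [CommSemiring K] [Semiring A] [Algebra K A] {s : Set A}

theorem one_sup_span_mul_top (h : Algebra.adjoin K s = ⊤) :
    1 ⊔ Submodule.span K s * ⊤ = ⊤ := by
  have top_eq_span : (⊤ : Submodule K A) = Submodule.span K (Submonoid.closure s) := by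
    rw [← Algebra.adjoin_eq_span, h, Algebra.top_toSubmodule]
  refine top_le_iff.1 (top_eq_span.trans_le (Submodule.span_le.2 fun a ha ↦ ?_))
  induction ha using Submonoid.closure_induction_left with
  | one => exact Submodule.mem_sup_left (Submodule.one_le.1 le_rfl)
  | mul_left x hx y _ _ =>
    exact Submodule.mem_sup_right
      (Submodule.mul_mem_mul (Submodule.subset_span hx) Submodule.mem_top)

theorem top_mul_span_mul_top (h : Algebra.adjoin K s = ⊤) :
    ⊤ * Submodule.span K s * ⊤ = Submodule.span K s * ⊤ := by
  refine le_antisymm ?_ (mul_le_mul_left (le_mul_of_one_le_left' le_top) _)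
  calc ⊤ * Submodule.span K s * ⊤
      = (1 ⊔ Submodule.span K s * ⊤) * Submodule.span K s * ⊤ := by rw [one_sup_span_mul_top h]
    _ = Submodule.span K s * ⊤ ⊔ Submodule.span K s * (⊤ * Submodule.span K s * ⊤) := by
        simp only [Submodule.sup_mul, one_mul, mul_assoc]
    _ ≤ Submodule.span K s * ⊤ := sup_le le_rfl (mul_le_mul_right le_top _)

theorem top_mul_span_mul_top_pow_le (h : Algebra.adjoin K s = ⊤) (n : ℕ) :
    (⊤ * Submodule.span K s * ⊤) ^ n ≤ Submodule.span K s ^ n * ⊤ := by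
  induction n with
  | zero => rw [pow_zero, pow_zero, one_mul]; exact le_top
  | succ n ih =>
    calc (⊤ * Submodule.span K s * ⊤) ^ (n + 1)
        ≤ Submodule.span K s ^ n * ⊤ * (⊤ * Submodule.span K s * ⊤) := by
          rw [pow_succ]
          exact mul_le_mul_left ih _
      _ = Submodule.span K s ^ n * (⊤ * Submodule.span K s * ⊤) := by
        rw [top_mul_span_mul_top h, mul_assoc, ← mul_assoc ⊤, top_mul_span_mul_top h]
      _ = Submodule.span K s ^ (n + 1) * ⊤ := by
        rw [top_mul_span_mul_top h, pow_succ, mul_assoc]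

end Generators

section TruncAlg

variable {K : Type*} [Field K] {r L : ℕ}

variable (K r L) in
/-- The quotient map `K⟨X_1,…,X_r⟩ → Λ`, with codomain `TruncAlg K r L` rather than the underlying
`RingQuot`. -/
def truncMk : FreeAlgebra K (Fin r) →ₐ[K] TruncAlg K r L :=
  RingQuot.mkAlgHom K (TruncRel K r L)

theorem truncMk_surjective : Function.Surjective (truncMk K r L) :=
  RingQuot.mkAlgHom_surjective K _

theorem adjoin_range_gen : Algebra.adjoin K (Set.range (gen K r L)) = ⊤ := by
  have h_range : Set.range (gen K r L) = truncMk K r L '' Set.range (FreeAlgebra.ι K) :=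
    Set.range_comp _ _
  rw [h_range, ← AlgHom.map_adjoin, FreeAlgebra.adjoin_range_ι, Algebra.map_top,
    AlgHom.range_eq_top]
  exact truncMk_surjective

theorem prod_gen_eq_zero (f : Fin (L + 1) → Fin r) :
    (List.ofFn fun j ↦ gen K r L (f j)).prod = 0 := by
  have h_rel : truncMk K r L (List.ofFn fun j ↦ FreeAlgebra.ι K (f j)).prod = truncMk K r L 0 :=
    RingQuot.mkAlgHom_rel K ⟨⟨f, rfl⟩, rfl⟩
  rwa [map_zero, map_list_prod, List.map_ofFn] at h_rel

theorem span_range_gen_pow_eq_bot : Submodule.span K (Set.range (gen K r L)) ^ (L + 1) = ⊥ := by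
  rw [Submodule.span_pow, Submodule.span_eq_bot]
  intro x hx
  obtain ⟨f, rfl⟩ := Set.mem_pow.1 hx
  choose g hg using fun i ↦ (f i).2
  simp only [← hg, prod_gen_eq_zero]

theorem Jrad_pow_eq_bot : Jrad K r L ^ (L + 1) = ⊥ := by
  rw [← le_bot_iff]
  exact (top_mul_span_mul_top_pow_le adjoin_range_gen (L + 1)).trans_eq
    (by rw [span_range_gen_pow_eq_bot, Submodule.bot_mul])

variable (K r L) in
/-- The arrow ideal `J` of the truncated path algebra, i.e. `Jrad` bundled as an ideal. -/
def arrowIdeal : Ideal (TruncAlg K r L) where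
  __ := Jrad K r L
  smul_mem' b a ha := by
    have h_mul : ⊤ * Jrad K r L ≤ Jrad K r L := by
      rw [Jrad, ← mul_assoc, ← mul_assoc]
      exact mul_le_mul_left (mul_le_mul_left le_top _) _
    exact h_mul (Submodule.mul_mem_mul Submodule.mem_top ha)

instance : (arrowIdeal K r L).IsTwoSided where
  mul_mem_of_left {a} b ha := by
    have h_mul : Jrad K r L * ⊤ ≤ Jrad K r L := by
      rw [Jrad, mul_assoc]
      exact mul_le_mul_right le_top _
    exact h_mul (Submodule.mul_mem_mul ha Submodule.mem_top)

theorem restrictScalars_arrowIdeal : (arrowIdeal K r L).restrictScalars K = Jrad K r L := rfl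

theorem arrowIdeal_pow_eq_bot : arrowIdeal K r L ^ (L + 1) = ⊥ := by
  apply Submodule.restrictScalars_injective K
  rw [Submodule.restrictScalars_pow L.succ_ne_zero, restrictScalars_arrowIdeal, Jrad_pow_eq_bot,
    Submodule.restrictScalars_bot]

theorem algebraMap_quotient_arrowIdeal_surjective :
    Function.Surjective (algebraMap K (TruncAlg K r L ⧸ arrowIdeal K r L)) := by
  intro y
  obtain ⟨a, rfl⟩ := Ideal.Quotient.mk_surjective y
  have ha : a ∈ 1 ⊔ Jrad K r L := by
    rw [Jrad, top_mul_span_mul_top adjoin_range_gen, one_sup_span_mul_top adjoin_range_gen]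
    exact Submodule.mem_top
  obtain ⟨y, hy, j, hj, rfl⟩ := Submodule.mem_sup.1 ha
  obtain ⟨c, rfl⟩ := Submodule.mem_one.1 hy
  refine ⟨c, ?_⟩
  rw [map_add, Ideal.Quotient.eq_zero_iff_mem.2 (show j ∈ arrowIdeal K r L from hj), add_zero]
  rfl

instance : IsSemisimpleRing (TruncAlg K r L ⧸ arrowIdeal K r L) :=
  RingHom.isSemisimpleRing_of_surjective _ algebraMap_quotient_arrowIdeal_surjective

theorem jacobson_truncAlg : Ring.jacobson (TruncAlg K r L) = arrowIdeal K r L :=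
  jacobson_eq_of_pow_eq_bot arrowIdeal_pow_eq_bot

theorem jacobson_truncAlg_pow_eq_bot : Ring.jacobson (TruncAlg K r L) ^ (L + 1) = ⊥ := by
  rw [jacobson_truncAlg, arrowIdeal_pow_eq_bot]

theorem mem_Jrad_iff {a : TruncAlg K r L} :
    a ∈ Jrad K r L ↔ a ∈ Ring.jacobson (TruncAlg K r L) := by
  rw [jacobson_truncAlg]
  rfl

instance : IsSemisimpleRing (TruncAlg K r L ⧸ Ring.jacobson (TruncAlg K r L)) :=
  isSemisimpleRing_quotient_jacobson_of_pow_eq_bot arrowIdeal_pow_eq_bot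

theorem jpow_eq_radSeries (M : Type*) [AddCommGroup M] [Module K M] [Module (TruncAlg K r L) M]
    [IsScalarTower K (TruncAlg K r L) M] :
    jpow K r L M = radSeries (TruncAlg K r L) M := by
  ext1 l
  obtain rfl | hl := eq_or_ne l 0
  · rw [radSeries_zero, eq_top_iff]
    exact fun x _ ↦ Submodule.subset_span
      ⟨1, by rw [pow_zero]; exact Submodule.one_le.1 le_rfl, x, (one_smul _ x).symm⟩
  · rw [jpow, radSeries, jacobson_truncAlg, ← restrictScalars_arrowIdeal,
      ← Submodule.restrictScalars_pow hl]
    refine le_antisymm (Submodule.span_le.2 ?_) (Submodule.smul_le.2 ?_)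
    · rintro _ ⟨a, ha, m, rfl⟩
      exact Submodule.smul_mem_smul ha Submodule.mem_top
    · exact fun a ha m _ ↦ Submodule.subset_span ⟨a, ha, m, rfl⟩

theorem radLayering_eq_radDims (M : Type*) [AddCommGroup M] [Module K M]
    [Module (TruncAlg K r L) M] [IsScalarTower K (TruncAlg K r L) M] :
    radLayering K r L M = radDims K (TruncAlg K r L) M L := by
  unfold radLayering radDims
  rw [jpow_eq_radSeries]

theorem socLayering_eq_socDims (M : Type*) [AddCommGroup M] [Module K M]
    [Module (TruncAlg K r L) M] [IsScalarTower K (TruncAlg K r L) M] :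
    socLayering K r L M = socDims K (TruncAlg K r L) M L := rfl

end TruncAlg

theorem stmt7_general (K : Type*) [Field K] {R : Type*} [Ring R] [Algebra K R]
    [IsSemisimpleRing (R ⧸ Ring.jacobson R)] {L : ℕ} (hJ : Ring.jacobson R ^ (L + 1) = ⊥)
    (M : Type*) [AddCommGroup M] [Module K M] [Module R M] [IsScalarTower K R M]
    [FiniteDimensional K M] :
    ((socDims K R M L ≠ revTuple L (radDims K R M L)) ↔
      (∃ ρ : ℕ, 1 ≤ ρ ∧ ρ ≤ L ∧ ∃ x : M, x ∉ radSeries R M ρ ∧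
        ∀ a ∈ Ring.jacobson R, a • x ∈ radSeries R M (ρ + 1))) ∧
    ((∃ ρ : ℕ, 1 ≤ ρ ∧ ρ ≤ L ∧ ∃ x : M, x ∉ radSeries R M ρ ∧
        ∀ a ∈ Ring.jacobson R, a • x ∈ radSeries R M (ρ + 1)) ↔
      (∃ ρ : ℕ, ρ + 1 ≤ L ∧
        ∃ p : Submodule R (radSeries R M ρ ⧸
            Submodule.comap (radSeries R M ρ).subtype (radSeries R M (ρ + 2))),
          IsSimpleModule R p ∧ ∃ q, IsCompl p q)) :=
  ⟨not_iff_comm.1 <|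
      ((socDims_eq_revTuple_radDims_iff hJ).trans (forall_socSeries_eq_radSeries_iff hJ)).symm,
    exists_notMem_radSeries_iff_exists_simple_summand⟩

/-- For a finite-dimensional `Λ`-module `M`, the following are equivalent:
(a) `socseq M ≠ reverse (rad M)`;
(b) there are `ρ ∈ {1,…,L}` and `x ∈ M` with `x ∉ J^ρ M` and `J x ⊆ J^{ρ+1} M`;
(c) there is `ρ ∈ {0,…,L-1}` such that `J^ρ M / J^{ρ+2} M` has a simple direct summand. -/
theorem stmt7 (K : Type) [Field K] [IsAlgClosed K] (r L : ℕ) (hr : 0 < r) (hL : 0 < L)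
    (M : Type) [AddCommGroup M] [Module K M] [Module (TruncAlg K r L) M]
    [IsScalarTower K (TruncAlg K r L) M] [FiniteDimensional K M] :
    ((socLayering K r L M ≠ revTuple L (radLayering K r L M)) ↔
      (∃ ρ : ℕ, 1 ≤ ρ ∧ ρ ≤ L ∧ ∃ x : M, x ∉ jpow K r L M ρ ∧
        ∀ a ∈ Jrad K r L, a • x ∈ jpow K r L M (ρ + 1))) ∧
    ((∃ ρ : ℕ, 1 ≤ ρ ∧ ρ ≤ L ∧ ∃ x : M, x ∉ jpow K r L M ρ ∧
        ∀ a ∈ Jrad K r L, a • x ∈ jpow K r L M (ρ + 1)) ↔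
      (∃ ρ : ℕ, ρ + 1 ≤ L ∧
        ∃ p : Submodule (TruncAlg K r L)
          (↥(jpow K r L M ρ) ⧸
            Submodule.comap (jpow K r L M ρ).subtype (jpow K r L M (ρ + 2))),
          IsSimpleModule (TruncAlg K r L) ↥p ∧ ∃ q, IsCompl p q)) := by
  rw [socLayering_eq_socDims, radLayering_eq_radDims, jpow_eq_radSeries]
  simpa only [mem_Jrad_iff] using
    stmt7_general K (R := TruncAlg K r L) jacobson_truncAlg_pow_eq_bot M
end
end

section
/- Let f : X → A be an upper semicontinuous map from a topological space X to a partially ordered set A, and assume the image f(X) is well partially ordered. Then for every a ∈ A, the preimages f^{-1}({b ∈ A | b ≤ a}) and f^{-1}({b ∈ A | b < a}) are open subsets of X. -/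
/-- A map `f : X → A` to a poset is upper semicontinuous if the preimage of every
up-set `[a, ∞)` is closed. -/
def UpperSemicontinuousToPoset {X A : Type*} [TopologicalSpace X] [PartialOrder A]
    (f : X → A) : Prop :=
  ∀ a : A, IsClosed (f ⁻¹' {b | a ≤ b})

/-- A subset `S` of a poset is well partially ordered if it contains no infinite strictly
descending chain and every nonempty subset of `S` has only finitely many minimal elements. -/
def WellPartiallyOrdered {A : Type*} [PartialOrder A] (S : Set A) : Prop :=
  (¬ ∃ g : ℕ → A, (∀ n, g n ∈ S) ∧ ∀ n, g (n + 1) < g n) ∧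
  (∀ T : Set A, T ⊆ S → T.Nonempty → {a ∈ T | ∀ b ∈ T, b ≤ a → b = a}.Finite)

/-!
Both `(-∞, a]` and `(-∞, a)` are lower sets, so their complements are upper sets. For any upper set
`U`, every point of `U ∩ range f` lies above a minimal one because `range f` has no infinite
descending chain, and there are only finitely many minimal points `m`. Hence `f ⁻¹' U` is the union
of finitely many closed sets `f ⁻¹' [m, ∞)`.
-/

theorem exists_minimal_le_of_isWF {A : Type*} [Preorder A] {S : Set A} (hS : S.IsWF) {a : A}
    (ha : a ∈ S) : ∃ m ≤ a, Minimal (· ∈ S) m := by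
  have hwf : (S ∩ Set.Iic a).IsWF := hS.mono Set.inter_subset_left
  obtain ⟨m, ⟨hmS, hma⟩, hmin⟩ := hwf.exists_minimal ⟨a, ha, le_rfl⟩
  exact ⟨m, hma, hmS, fun b hb hbm => hmin ⟨hb, hbm.trans hma⟩ hbm⟩

theorem preimage_eq_biUnion_minimal_preimage_Ici {X A : Type*} [Preorder A] {f : X → A}
    {U : Set A} (hwf : (U ∩ Set.range f).IsWF) (hU : IsUpperSet U) :
    f ⁻¹' U = ⋃ m ∈ {m | Minimal (· ∈ U ∩ Set.range f) m}, f ⁻¹' Set.Ici m := by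
  refine Set.Subset.antisymm (fun x hx => ?_) (Set.iUnion₂_subset fun m hm x hmx => ?_)
  · obtain ⟨m, hmx, hm⟩ := exists_minimal_le_of_isWF hwf ⟨hx, Set.mem_range_self x⟩
    exact Set.mem_biUnion hm hmx
  · exact hU hmx hm.prop.1

namespace WellPartiallyOrdered

variable {A : Type*} [PartialOrder A] {S T : Set A}

theorem isWF (hS : WellPartiallyOrdered S) : S.IsWF :=
  Set.isWF_iff_no_descending_seq.2 fun g hg hgS =>
    hS.1 ⟨g, hgS, fun n => hg n.lt_succ_self⟩

theorem finite_setOf_minimal (hS : WellPartiallyOrdered S) (hTS : T ⊆ S) :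
    {a | Minimal (· ∈ T) a}.Finite := by
  obtain rfl | hT := T.eq_empty_or_nonempty
  · exact Set.finite_empty.subset fun _ ha => ha.prop
  · exact (hS.2 T hTS hT).subset fun _ ha => ⟨ha.prop, fun _ hb hba => ha.eq_of_le hb hba⟩

end WellPartiallyOrdered

theorem UpperSemicontinuousToPoset.isClosed_preimage_of_isUpperSet {X A : Type*}
    [TopologicalSpace X] [PartialOrder A] {f : X → A} (hf : UpperSemicontinuousToPoset f)
    (hwpo : WellPartiallyOrdered (Set.range f)) {U : Set A} (hU : IsUpperSet U) :
    IsClosed (f ⁻¹' U) := by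
  rw [preimage_eq_biUnion_minimal_preimage_Ici (hwpo.isWF.mono Set.inter_subset_right) hU]
  exact (hwpo.finite_setOf_minimal Set.inter_subset_right).isClosed_biUnion fun m _ => hf m

theorem stmt11_general {X A : Type*} [TopologicalSpace X] [PartialOrder A] {f : X → A}
    (hf : UpperSemicontinuousToPoset f) (hwpo : WellPartiallyOrdered (Set.range f))
    {D : Set A} (hD : IsLowerSet D) : IsOpen (f ⁻¹' D) :=
  isClosed_compl_iff.1 (hf.isClosed_preimage_of_isUpperSet hwpo hD.compl)

/-- If `f : X → A` is upper semicontinuous with well partially ordered image,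
then the preimages of `(-∞, a]` and `(-∞, a)` are open for every `a ∈ A`. -/
theorem stmt11 {X A : Type*} [TopologicalSpace X] [PartialOrder A] (f : X → A)
    (hf : UpperSemicontinuousToPoset f) (hwpo : WellPartiallyOrdered (Set.range f)) :
    ∀ a : A, IsOpen (f ⁻¹' {b | b ≤ a}) ∧ IsOpen (f ⁻¹' {b | b < a}) :=
  fun a => ⟨stmt11_general hf hwpo (isLowerSet_Iic a), stmt11_general hf hwpo (isLowerSet_Iio a)⟩
end

section
/- Let f : X → A be an upper semicontinuous map from a topological space X to a partially ordered set A, and assume the image f(X) is well partially ordered. Then for every irreducible (in particular nonempty) subset U ⊆ X, the set f(U) has exactly one minimal element c; moreover c ≤ f(x) for all x ∈ U, and the fiber {x ∈ U | f(x) = c} is a nonempty subset of U that is open and dense in U with its subspace topology. -/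
/-!
The image of `f` is a well partial order in the usual sense, so each up-set of it is generated by
finitely many elements; hence preimages of arbitrary up-sets are closed and every `f ⁻¹' Iic a` is
open. On an irreducible `U` the opens `f ⁻¹' Iic (f x)` and `f ⁻¹' Iic (f y)` meet, so `f '' U` is
directed downwards and a minimal element `c` of it is least. The fiber over `c` in `U` is then cut
out by the open set `f ⁻¹' Iic c`, and nonempty opens of an irreducible space are dense.
-/

section

open Set

theorem WellPartiallyOrdered.finite_of_isAntichain {A : Type*} [PartialOrder A] {S T : Set A}
    (hS : WellPartiallyOrdered S) (hTS : T ⊆ S) (hT : IsAntichain (· ≤ ·) T) : T.Finite := by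
  obtain rfl | hne := T.eq_empty_or_nonempty
  · exact finite_empty
  · exact (hS.2 T hTS hne).subset fun a ha => ⟨ha, fun b hb hba => hT.eq hb ha hba⟩

theorem WellPartiallyOrdered.wellFoundedLT {A : Type*} [PartialOrder A] {S : Set A}
    (hS : WellPartiallyOrdered S) : WellFoundedLT S :=
  ⟨wellFounded_iff_isEmpty_descending_chain.2
    ⟨fun g => hS.1 ⟨fun n => g.1 n, fun n => (g.1 n).2, g.2⟩⟩⟩

theorem WellPartiallyOrdered.isPWO {A : Type*} [PartialOrder A] {S : Set A}
    (hS : WellPartiallyOrdered S) : S.IsPWO := by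
  have antichain_finite (T : Set S) (hT : IsAntichain (· ≤ ·) T) : T.Finite :=
    (hS.finite_of_isAntichain (Subtype.coe_image_subset S T)
      (hT.image_embedding (OrderEmbedding.subtype (· ∈ S)))).of_finite_image
      Subtype.val_injective.injOn
  have subtype_wqo : WellQuasiOrderedLE S :=
    wellQuasiOrderedLE_iff.2 ⟨hS.wellFoundedLT, antichain_finite⟩
  simpa only [image_univ, Subtype.range_coe] using
    (isPWO_of_wellQuasiOrderedLE (univ : Set S)).image_of_monotone (Subtype.mono_coe S)

theorem finite_setOf_minimal_of_isPWO {A : Type*} [PartialOrder A] {S : Set A} (hS : S.IsPWO) :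
    {a | Minimal (· ∈ S) a}.Finite :=
  (setOfPred_minimal_antichain (· ∈ S)).finite_of_partiallyWellOrderedOn
    (hS.mono (setOfPred_minimal_subset S))

namespace UpperSemicontinuousToPoset

variable {X A : Type*} [TopologicalSpace X] [PartialOrder A] {f : X → A} {U : Set X}

theorem isClosed_preimage_of_isUpperSet_s12 (hf : UpperSemicontinuousToPoset f)
    (hpwo : (range f).IsPWO) {s : Set A} (hs : IsUpperSet s) : IsClosed (f ⁻¹' s) := by
  have inter_pwo : (s ∩ range f).IsPWO := hpwo.mono inter_subset_right
  have preimage_eq :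
      f ⁻¹' s = ⋃ a ∈ {a | Minimal (· ∈ s ∩ range f) a}, f ⁻¹' {b | a ≤ b} := by
    ext x
    simp only [mem_preimage, mem_iUnion, mem_ofPred_eq, exists_prop]
    constructor
    · intro hx
      obtain ⟨a, hax, ha⟩ := inter_pwo.exists_le_minimal ⟨hx, mem_range_self x⟩
      exact ⟨a, ha, hax⟩
    · rintro ⟨a, ha, hax⟩
      exact hs hax ha.prop.1
  rw [preimage_eq]
  exact (finite_setOf_minimal_of_isPWO inter_pwo).isClosed_biUnion fun a _ => hf a

theorem isOpen_preimage_Iic (hf : UpperSemicontinuousToPoset f) (hpwo : (range f).IsPWO) (a : A) :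
    IsOpen (f ⁻¹' Iic a) :=
  isClosed_compl_iff.1 <| hf.isClosed_preimage_of_isUpperSet_s12 hpwo (isLowerSet_Iic a).compl

theorem directedOn_image (hf : UpperSemicontinuousToPoset f) (hpwo : (range f).IsPWO)
    (hU : IsPreirreducible U) : DirectedOn (· ≥ ·) (f '' U) := by
  rintro _ ⟨x, hx, rfl⟩ _ ⟨y, hy, rfl⟩
  obtain ⟨z, hzU, hzx, hzy⟩ := hU _ _ (hf.isOpen_preimage_Iic hpwo (f x))
    (hf.isOpen_preimage_Iic hpwo (f y)) ⟨x, hx, le_rfl⟩ ⟨y, hy, le_rfl⟩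
  exact ⟨f z, mem_image_of_mem f hzU, hzx, hzy⟩

theorem exists_isLeast_image (hf : UpperSemicontinuousToPoset f) (hpwo : (range f).IsPWO)
    (hU : IsIrreducible U) : ∃ c, IsLeast (f '' U) c := by
  obtain ⟨c, hc⟩ := (hpwo.mono (image_subset_range f U)).exists_minimal (hU.nonempty.image f)
  exact ⟨c, (hf.directedOn_image hpwo hU.isPreirreducible).minimal_iff_isLeast.1 hc⟩

theorem isOpen_fiber_of_isLeast_image (hf : UpperSemicontinuousToPoset f)
    (hpwo : (range f).IsPWO) {c : A} (hc : IsLeast (f '' U) c) : IsOpen {y : U | f y = c} := by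
  have fiber_eq : {y : U | f y = c} = Subtype.val ⁻¹' (f ⁻¹' Iic c) := by
    ext y
    exact ⟨le_of_eq, fun hy => le_antisymm hy (hc.2 (mem_image_of_mem f y.2))⟩
  rw [fiber_eq]
  exact (hf.isOpen_preimage_Iic hpwo c).preimage continuous_subtype_val

end UpperSemicontinuousToPoset

end

/-- If `f : X → A` is upper semicontinuous with well partially ordered image,
then on every irreducible subset `U ⊆ X` the set `f(U)` has exactly one minimal element `c`;
moreover `c ≤ f x` for all `x ∈ U`, and the fiber `{x ∈ U | f x = c}` is nonempty, open and
dense in `U` with its subspace topology. -/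
theorem stmt12 {X A : Type*} [TopologicalSpace X] [PartialOrder A] (f : X → A)
    (hf : UpperSemicontinuousToPoset f) (hwpo : WellPartiallyOrdered (Set.range f))
    (U : Set X) (hU : IsIrreducible U) :
    ∃ c ∈ f '' U,
      (∀ b ∈ f '' U, b ≤ c → b = c) ∧
      (∀ b ∈ f '' U, (∀ b' ∈ f '' U, b' ≤ b → b' = b) → b = c) ∧
      (∀ x ∈ U, c ≤ f x) ∧
      ({y : U | f ↑y = c}.Nonempty ∧ IsOpen {y : U | f ↑y = c} ∧ Dense {y : U | f ↑y = c}) := by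
  have hpwo := hwpo.isPWO
  obtain ⟨c, hc⟩ := hf.exists_isLeast_image hpwo hU
  have fiber_nonempty : {y : U | f ↑y = c}.Nonempty := by
    obtain ⟨x, hx, hxc⟩ := hc.1
    exact ⟨⟨x, hx⟩, hxc⟩
  have fiber_open : IsOpen {y : U | f ↑y = c} := hf.isOpen_fiber_of_isLeast_image hpwo hc
  have : PreirreducibleSpace U := Subtype.preirreducibleSpace hU.isPreirreducible
  exact ⟨c, hc.1, fun b hb hbc => le_antisymm hbc (hc.2 hb),
    fun b hb hb_min => (hb_min c hc.1 (hc.2 hb)).symm,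
    fun x hx => hc.2 (Set.mem_image_of_mem f hx),
    fiber_nonempty, fiber_open, fiber_open.dense fiber_nonempty⟩
end
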